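/- Let a, b ∈ F_p be nonzero floating-point numbers and let s ∈ {RD(a + b), RU(a + b)}. If the exponents of a and b satisfy |e_a − e_b| ≤ p − 1, then s − (a + b) ∈ F_p, i.e. the rounding error of the directed-rounded sum is itself exactly representable. -/

import Mathlib

/-!
Say `e_b ≤ e_a ≤ e_b + p`. Then `x = a + b` is an integer multiple of `2 ^ e_b`, and
`|x| < 2 ^ (2 * p + e_b)` because `|a| ≤ (2 ^ p - 1) * 2 ^ e_a` and `|b| < 2 ^ (p + e_b)`. If
`|x| ≤ 2 ^ (p + e_b)`, then `x` is itself representable. Otherwise the exponent `E` of `x` satisfies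
`e_b ≤ E ≤ e_b + p`. Rounding down takes `x` to the multiple of `2 ^ E` just below it, so the error
is at most `2 ^ E ≤ 2 ^ (p + e_b)` in absolute value and still a multiple of `2 ^ e_b`: it is
representable. Rounding up reduces to rounding down by the symmetry `x ↦ -x`.
-/

/-- The radix-2, precision-`p` floating-point numbers with unlimited exponent range. -/
def Fp (p : ℕ) : Set ℝ := {x : ℝ | ∃ M e : ℤ, |M| ≤ 2 ^ p - 1 ∧ x = (M : ℝ) * (2 : ℝ) ^ e}

/-- Round toward `-∞`: the largest floating-point number `≤ x`. -/
noncomputable def RD (p : ℕ) (x : ℝ) : ℝ := sSup {f : ℝ | f ∈ Fp p ∧ f ≤ x}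

/-- Round toward `+∞`: the smallest floating-point number `≥ x`. -/
noncomputable def RU (p : ℕ) (x : ℝ) : ℝ := sInf {f : ℝ | f ∈ Fp p ∧ x ≤ f}

/-- `y` is a faithful rounding of `x`. -/
def Faithful (p : ℕ) (x y : ℝ) : Prop := y = RD p x ∨ y = RU p x

/-- The exponent of a nonzero `a ∈ F_p`: `e_a = ⌊log₂ |a|⌋ - p + 1`. -/
noncomputable def fpExp (p : ℕ) (a : ℝ) : ℤ := Int.log 2 |a| - (p : ℤ) + 1

/-- The additive group `2 ^ e * ℤ` of real multiples of `2 ^ e`: the fixed-point grid that contains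
all the floating-point numbers of exponent at least `e`. -/
noncomputable def dyadicGrid (e : ℤ) : AddSubgroup ℝ := AddSubgroup.zmultiples ((2 : ℝ) ^ e)

section DyadicGrid

variable {e : ℤ} {x g : ℝ}

lemma mem_dyadicGrid_iff : x ∈ dyadicGrid e ↔ ∃ n : ℤ, n * (2 : ℝ) ^ e = x := by
  simp only [dyadicGrid, AddSubgroup.mem_zmultiples_iff, zsmul_eq_mul]

lemma zpow_mem_dyadicGrid {k : ℤ} (h : e ≤ k) : (2 : ℝ) ^ k ∈ dyadicGrid e := by
  obtain ⟨d, rfl⟩ := Int.le.dest h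
  refine mem_dyadicGrid_iff.2 ⟨2 ^ d, ?_⟩
  rw [add_comm, zpow_add₀ two_ne_zero, zpow_natCast]
  norm_cast

lemma dyadicGrid_antitone : Antitone dyadicGrid := fun _ _ h ↦
  AddSubgroup.zmultiples_le_of_mem (zpow_mem_dyadicGrid h)

lemma le_floor_mul_of_mem_dyadicGrid (hg : g ∈ dyadicGrid e) (hgx : g ≤ x) :
    g ≤ ⌊x / (2 : ℝ) ^ e⌋ * (2 : ℝ) ^ e := by
  obtain ⟨n, rfl⟩ := mem_dyadicGrid_iff.1 hg
  gcongr
  exact Int.le_floor.2 ((le_div_iff₀ (by positivity)).2 hgx)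

lemma abs_intCast_mul_zpow_lt_iff {p : ℕ} {n : ℤ} :
    |n * (2 : ℝ) ^ e| < 2 ^ (p + e) ↔ |n| < 2 ^ p := by
  have hpos : (0 : ℝ) < 2 ^ e := by positivity
  rw [abs_mul, abs_of_pos hpos, zpow_add₀ two_ne_zero, mul_lt_mul_iff_left₀ hpos, zpow_natCast]
  norm_cast

end DyadicGrid

section Exponent

variable {p : ℕ} {e : ℤ} {x : ℝ}

lemma le_fpExp_iff (hx : x ≠ 0) : e ≤ fpExp p x ↔ (2 : ℝ) ^ (p - 1 + e) ≤ |x| := by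
  have h := Int.zpow_le_iff_le_log (b := 2) one_lt_two (x := p - 1 + e) (abs_pos.2 hx)
  rw [Nat.cast_ofNat] at h
  rw [h, fpExp]
  constructor <;> intro <;> linarith

lemma fpExp_lt_iff (hx : x ≠ 0) : fpExp p x < e ↔ |x| < (2 : ℝ) ^ (p - 1 + e) := by
  simpa only [not_le] using (le_fpExp_iff hx).not

lemma zpow_fpExp_le_abs (hx : x ≠ 0) : (2 : ℝ) ^ (p - 1 + fpExp p x) ≤ |x| :=
  (le_fpExp_iff hx).1 le_rfl

lemma abs_lt_zpow_fpExp : |x| < (2 : ℝ) ^ (p + fpExp p x) := by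
  have h := Int.lt_zpow_succ_log_self (b := 2) one_lt_two |x|
  rwa [Nat.cast_ofNat, show Int.log 2 |x| + 1 = p + fpExp p x by rw [fpExp]; ring] at h

end Exponent

section Representable

variable {p : ℕ} {e : ℤ} {x : ℝ}

lemma zero_mem_Fp : (0 : ℝ) ∈ Fp p :=
  ⟨0, 0, by simp [one_le_pow₀], by simp⟩

lemma neg_mem_Fp (hx : x ∈ Fp p) : -x ∈ Fp p := by
  obtain ⟨M, e, hM, rfl⟩ := hx
  exact ⟨-M, e, by rwa [abs_neg], by rw [Int.cast_neg, neg_mul]⟩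

lemma neg_mem_Fp_iff : -x ∈ Fp p ↔ x ∈ Fp p :=
  ⟨fun h ↦ neg_neg x ▸ neg_mem_Fp h, neg_mem_Fp⟩

lemma zpow_mem_Fp (hp : 0 < p) (k : ℤ) : (2 : ℝ) ^ k ∈ Fp p := by
  have : (2 : ℤ) ≤ 2 ^ p := le_self_pow₀ one_le_two hp.ne'
  exact ⟨1, k, by rw [abs_one]; lia, by rw [Int.cast_one, one_mul]⟩

lemma pos_of_mem_Fp_of_ne_zero (hx : x ∈ Fp p) (hx0 : x ≠ 0) : 0 < p := by
  obtain ⟨M, e, hM, rfl⟩ := hx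
  have hM0 : 0 < |M| := abs_pos.2 (Int.cast_ne_zero.1 (left_ne_zero_of_mul hx0))
  refine Nat.pos_of_ne_zero ?_
  rintro rfl
  rw [pow_zero, sub_self] at hM
  exact hM.not_gt hM0

lemma mem_Fp_of_mem_dyadicGrid (hp : 0 < p) (hx : x ∈ dyadicGrid e)
    (hxe : |x| ≤ (2 : ℝ) ^ (p + e)) : x ∈ Fp p := by
  rcases hxe.lt_or_eq with hlt | heq
  · obtain ⟨n, rfl⟩ := mem_dyadicGrid_iff.1 hx
    exact ⟨n, e, Int.le_sub_one_of_lt (abs_intCast_mul_zpow_lt_iff.1 hlt), rfl⟩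
  · rcases eq_or_eq_neg_of_abs_eq heq with rfl | rfl
    · exact zpow_mem_Fp hp _
    · exact neg_mem_Fp (zpow_mem_Fp hp _)

lemma mem_dyadicGrid_of_mem_Fp (hx : x ∈ Fp p) (hx0 : x ≠ 0) (he : e ≤ fpExp p x) :
    x ∈ dyadicGrid e := by
  obtain ⟨M, k, hM, rfl⟩ := hx
  have hlt : (2 : ℝ) ^ (p - 1 + e) < 2 ^ (p + k) :=
    ((le_fpExp_iff hx0).1 he).trans_lt (abs_intCast_mul_zpow_lt_iff.2 (Int.lt_of_le_sub_one hM))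
  have hek : e ≤ k := by
    have := (zpow_lt_zpow_iff_right₀ one_lt_two).1 hlt
    lia
  exact dyadicGrid_antitone hek (mem_dyadicGrid_iff.2 ⟨M, rfl⟩)

lemma abs_le_of_mem_Fp (hx : x ∈ Fp p) (hx0 : x ≠ 0) :
    |x| ≤ (2 ^ p - 1) * (2 : ℝ) ^ fpExp p x := by
  obtain ⟨n, hn⟩ := mem_dyadicGrid_iff.1 (mem_dyadicGrid_of_mem_Fp hx hx0 le_rfl)
  have hlt := abs_lt_zpow_fpExp (p := p) (x := x)
  nth_rw 1 [← hn] at hlt ⊢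
  have hn_le : |n| ≤ 2 ^ p - 1 := Int.le_sub_one_of_lt (abs_intCast_mul_zpow_lt_iff.1 hlt)
  rw [abs_mul, abs_of_pos (by positivity : (0 : ℝ) < 2 ^ fpExp p x)]
  gcongr
  exact_mod_cast hn_le

end Representable

section Rounding

variable {p : ℕ} {e : ℤ} {x f s : ℝ}

lemma RD_eq_self (hx : x ∈ Fp p) : RD p x = x :=
  IsGreatest.csSup_eq ⟨⟨hx, le_rfl⟩, fun _ h ↦ h.2⟩

lemma RU_eq_neg_RD_neg : RU p x = -RD p (-x) := by
  rw [RU, RD, Real.sInf_def]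
  congr 2
  ext f
  simp only [Set.mem_neg, Set.mem_ofPred_eq, neg_mem_Fp_iff, le_neg]

lemma exists_mem_dyadicGrid_between (hp : 0 < p) (hx : x ≠ 0) (hf : f ∈ Fp p) (hfx : f ≤ x) :
    ∃ g ∈ dyadicGrid (fpExp p x), f ≤ g ∧ g ≤ x := by
  have hxlo := zpow_fpExp_le_abs (p := p) hx
  rcases lt_or_ge |f| (2 ^ (p - 1 + fpExp p x)) with hsmall | hlarge
  · -- The least point `2 ^ (p - 1 + fpExp p x)` of the binade of `x` separates `f` from `x`.
    have hxpos : 0 < x := by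
      by_contra! hneg
      rw [abs_of_nonpos hneg] at hxlo
      linarith [neg_le_abs f]
    rw [abs_of_pos hxpos] at hxlo
    exact ⟨_, zpow_mem_dyadicGrid (by lia), (le_abs_self f).trans hsmall.le, hxlo⟩
  · have hf0 : f ≠ 0 := abs_pos.1 (hlarge.trans_lt' (by positivity))
    exact ⟨f, mem_dyadicGrid_of_mem_Fp hf hf0 ((le_fpExp_iff hf0).2 hlarge), le_rfl, hfx⟩

lemma floor_mul_mem_Fp (hp : 0 < p) (hx : |x| ≤ (2 : ℝ) ^ (p + e)) :
    ⌊x / (2 : ℝ) ^ e⌋ * (2 : ℝ) ^ e ∈ Fp p := by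
  have hpos : (0 : ℝ) < 2 ^ e := by positivity
  refine mem_Fp_of_mem_dyadicGrid hp (mem_dyadicGrid_iff.2 ⟨_, rfl⟩) (abs_le.2 ⟨?_, ?_⟩)
  · have hbound : -(2 : ℝ) ^ (p + e) ∈ dyadicGrid e := neg_mem (zpow_mem_dyadicGrid (by lia))
    exact le_floor_mul_of_mem_dyadicGrid hbound (abs_le.1 hx).1
  · exact (sub_nonneg.1 (Int.sub_floor_div_mul_nonneg x hpos)).trans ((le_abs_self x).trans hx)

lemma RD_eq_floor_mul (hp : 0 < p) (hx : x ≠ 0) :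
    RD p x = ⌊x / (2 : ℝ) ^ fpExp p x⌋ * (2 : ℝ) ^ fpExp p x := by
  have hpos : (0 : ℝ) < 2 ^ fpExp p x := by positivity
  refine IsGreatest.csSup_eq ⟨⟨floor_mul_mem_Fp hp abs_lt_zpow_fpExp.le, ?_⟩, ?_⟩
  · exact sub_nonneg.1 (Int.sub_floor_div_mul_nonneg x hpos)
  · rintro f ⟨hf, hfx⟩
    obtain ⟨g, hg, hfg, hgx⟩ := exists_mem_dyadicGrid_between hp hx hf hfx
    exact hfg.trans (le_floor_mul_of_mem_dyadicGrid hg hgx)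

lemma RD_mem_dyadicGrid (hp : 0 < p) (hx : x ≠ 0) : RD p x ∈ dyadicGrid (fpExp p x) :=
  mem_dyadicGrid_iff.2 ⟨_, (RD_eq_floor_mul hp hx).symm⟩

lemma abs_RD_sub_lt (hp : 0 < p) (hx : x ≠ 0) : |RD p x - x| < (2 : ℝ) ^ fpExp p x := by
  have hpos : (0 : ℝ) < 2 ^ fpExp p x := by positivity
  rw [RD_eq_floor_mul hp hx, abs_sub_comm, abs_of_nonneg (Int.sub_floor_div_mul_nonneg x hpos)]
  exact Int.sub_floor_div_mul_lt x hpos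

lemma RD_sub_mem_Fp (hp : 0 < p) (hx : x ∈ dyadicGrid e) (hxe : |x| < (2 : ℝ) ^ (2 * p + e)) :
    RD p x - x ∈ Fp p := by
  by_cases hsmall : |x| ≤ (2 : ℝ) ^ (p + e)
  · rw [RD_eq_self (mem_Fp_of_mem_dyadicGrid hp hx hsmall), sub_self]
    exact zero_mem_Fp
  rw [not_le] at hsmall
  have hx0 : x ≠ 0 := abs_pos.1 (hsmall.trans' (by positivity))
  have hlo : e ≤ fpExp p x := (le_fpExp_iff hx0).2 <|
    (zpow_le_zpow_right₀ one_le_two (by lia)).trans hsmall.le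
  have hhi : fpExp p x ≤ p + e := by
    refine Int.lt_add_one_iff.1 ((fpExp_lt_iff hx0).2 ?_)
    rwa [show (p : ℤ) - 1 + (p + e + 1) = 2 * p + e by ring]
  refine mem_Fp_of_mem_dyadicGrid hp
    (sub_mem (dyadicGrid_antitone hlo (RD_mem_dyadicGrid hp hx0)) hx) ?_
  exact (abs_RD_sub_lt hp hx0).le.trans (zpow_le_zpow_right₀ one_le_two hhi)

lemma Faithful.sub_mem_Fp (hs : Faithful p x s) (hp : 0 < p) (hx : x ∈ dyadicGrid e)
    (hxe : |x| < (2 : ℝ) ^ (2 * p + e)) : s - x ∈ Fp p := by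
  rcases hs with rfl | rfl
  · exact RD_sub_mem_Fp hp hx hxe
  · have hneg := RD_sub_mem_Fp hp (neg_mem hx) (by rwa [abs_neg])
    rw [RU_eq_neg_RD_neg, ← neg_mem_Fp_iff]
    convert hneg using 1
    ring

end Rounding

section Sum

variable {p : ℕ} {a b : ℝ}

lemma add_mem_dyadicGrid (ha : a ∈ Fp p) (hb : b ∈ Fp p) (ha0 : a ≠ 0) (hb0 : b ≠ 0)
    (hle : fpExp p b ≤ fpExp p a) : a + b ∈ dyadicGrid (fpExp p b) :=
  add_mem (mem_dyadicGrid_of_mem_Fp ha ha0 hle) (mem_dyadicGrid_of_mem_Fp hb hb0 le_rfl)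

lemma abs_add_lt_zpow (ha : a ∈ Fp p) (ha0 : a ≠ 0) (hgap : fpExp p a ≤ p + fpExp p b) :
    |a + b| < (2 : ℝ) ^ (2 * p + fpExp p b) := by
  have hp1 : (0 : ℝ) ≤ 2 ^ p - 1 := sub_nonneg.2 (one_le_pow₀ one_le_two)
  calc |a + b| ≤ |a| + |b| := abs_add_le a b
    _ < (2 ^ p - 1) * 2 ^ fpExp p a + 2 ^ (p + fpExp p b) :=
      add_lt_add_of_le_of_lt (abs_le_of_mem_Fp ha ha0) abs_lt_zpow_fpExp
    _ ≤ (2 ^ p - 1) * 2 ^ (p + fpExp p b) + 2 ^ (p + fpExp p b) := by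
      gcongr
      exact one_le_two
    _ = 2 ^ (2 * p + fpExp p b) := by
      rw [sub_one_mul, sub_add_cancel, ← zpow_natCast, ← zpow_add₀ two_ne_zero]
      ring_nf

theorem directed_sum_error_representable_general (ha : a ∈ Fp p) (hb : b ∈ Fp p)
    (ha0 : a ≠ 0) (hb0 : b ≠ 0) (hexp : |fpExp p a - fpExp p b| ≤ p)
    {s : ℝ} (hs : Faithful p (a + b) s) : s - (a + b) ∈ Fp p := by
  wlog hle : fpExp p b ≤ fpExp p a generalizing a b
  · rw [add_comm] at hs ⊢
    exact this hb ha hb0 ha0 (by rwa [abs_sub_comm]) hs (le_of_not_ge hle)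
  have hgap : fpExp p a ≤ p + fpExp p b := sub_le_iff_le_add.1 ((le_abs_self _).trans hexp)
  exact hs.sub_mem_Fp (pos_of_mem_Fp_of_ne_zero ha ha0) (add_mem_dyadicGrid ha hb ha0 hb0 hle)
    (abs_add_lt_zpow ha ha0 hgap)

end Sum

/-- Sterbenz-type lemma of Boldo et al.: if the exponents of `a` and `b` differ by at
most `p - 1`, then the error of the directed-rounded sum is itself a floating-point
number. -/
theorem directed_sum_error_representable
    (p : ℕ) (hp : 2 ≤ p) (a b : ℝ)
    (ha : a ∈ Fp p) (hb : b ∈ Fp p) (ha0 : a ≠ 0) (hb0 : b ≠ 0)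
    (hexp : |fpExp p a - fpExp p b| ≤ (p : ℤ) - 1)
    (s : ℝ) (hs : s = RD p (a + b) ∨ s = RU p (a + b)) :
    s - (a + b) ∈ Fp p :=
  directed_sum_error_representable_general ha hb ha0 hb0
    (hexp.trans (sub_le_self _ zero_le_one)) hs
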